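/- Let k, N be natural numbers with 1 ≤ k < N, n := N − k, and assume kn ≥ 4. Then in Λ(V): (tr Φ)^{kn−4} ∧ ((tr Φ)² − tr(Φ²))² = (kn−4)! · n · (n+1) · k · (k−1) · [k(k−1)n(n−1) + 2(k−2)(k−3)n + 4(k−2)(n−1)] · T. (Equivalently, with τ₂ := ½((tr Φ)² − tr(Φ²)), this states ∫_{G(k,N)} (σ₁^∨)^{kN−k²−4} (σ_{1,1}^∨)² = ¼ (kN−k²−4)! (N−k)(N−k+1) k(k−1) [k(k−1)(N−k)(N−k−1) + 2(k−2)(k−3)(N−k) + 4(k−2)(N−k−1)] · (∏_{j=0}^{k−1} j!)/(∏_{j=N−k}^{N−1} j!).) -/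

import Mathlib

noncomputable section

/-- The real vector space with basis `ψ_s^j` (inl) and `ψ̄_s^j` (inr),
    `1 ≤ s ≤ n`, `1 ≤ j ≤ k`. -/
abbrev V (k n : ℕ) : Type := ((Fin n × Fin k) ⊕ (Fin n × Fin k)) → ℝ

/-- The fermionic variable `ψ_s^j` as a degree-1 element of the exterior algebra. -/
def ψ (k n : ℕ) (s : Fin n) (j : Fin k) : ExteriorAlgebra ℝ (V k n) :=
  ExteriorAlgebra.ι ℝ (Pi.single (Sum.inl (s, j)) (1 : ℝ))

/-- The fermionic variable `ψ̄_s^j` as a degree-1 element of the exterior algebra. -/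
def ψb (k n : ℕ) (s : Fin n) (j : Fin k) : ExteriorAlgebra ℝ (V k n) :=
  ExteriorAlgebra.ι ℝ (Pi.single (Sum.inr (s, j)) (1 : ℝ))

/-- `ω^{ij} = ∑_{s=1}^n ψ_s^i ∧ ψ̄_s^j`. -/
def ω (k n : ℕ) (i j : Fin k) : ExteriorAlgebra ℝ (V k n) :=
  ∑ s : Fin n, ψ k n s i * ψb k n s j

/-- `tr Φ = ∑_{i=1}^k ω^{ii}`. -/
def trPhi (k n : ℕ) : ExteriorAlgebra ℝ (V k n) :=
  ∑ i : Fin k, ω k n i i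

/-- `tr(Φ²) = ∑_{i,j=1}^k ω^{ij} ∧ ω^{ji}`. -/
def trPhi2 (k n : ℕ) : ExteriorAlgebra ℝ (V k n) :=
  ∑ i : Fin k, ∑ j : Fin k, ω k n i j * ω k n j i

/-- The top-degree generator `T = ∧_{s=1}^n (ψ_s^1 ∧ ψ̄_s^1 ∧ ⋯ ∧ ψ_s^k ∧ ψ̄_s^k)`. -/
def T (k n : ℕ) : ExteriorAlgebra ℝ (V k n) :=
  ((List.finRange n).map (fun s =>
    ((List.finRange k).map (fun j => ψ k n s j * ψb k n s j)).prod)).prod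


section helpers

variable {k n : ℕ}

lemma ι_anti (u v : V k n) :
    ExteriorAlgebra.ι ℝ u * ExteriorAlgebra.ι ℝ v
      = -(ExteriorAlgebra.ι ℝ v * ExteriorAlgebra.ι ℝ u) :=
  eq_neg_of_add_eq_zero_left (ExteriorAlgebra.ι_add_mul_swap u v)

lemma ιι_central (u v : V k n) (x : ExteriorAlgebra ℝ (V k n)) :
    Commute (ExteriorAlgebra.ι ℝ u * ExteriorAlgebra.ι ℝ v) x := by
  induction x using ExteriorAlgebra.induction with
  | algebraMap r => exact (Algebra.commutes r _).symm
  | ι w =>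
    show _ * _ = _ * _
    rw [mul_assoc, ι_anti v w, mul_neg, ← mul_assoc, ι_anti u w, neg_mul, neg_neg, mul_assoc]
  | mul a b ha hb => exact ha.mul_right hb
  | add a b ha hb => exact ha.add_right hb

lemma ω_central (i j : Fin k) (x : ExteriorAlgebra ℝ (V k n)) : Commute (ω k n i j) x :=
  Commute.sum_left _ _ _ fun _ _ => ιι_central _ _ x

lemma e_central (x : ExteriorAlgebra ℝ (V k n)) : Commute (trPhi k n) x :=
  Commute.sum_left _ _ _ fun _ _ => ω_central _ _ x

/-- Contraction against the dual basis vector of `ψb s i`. -/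
def dd (s : Fin n) (i : Fin k) : ExteriorAlgebra ℝ (V k n) →ₗ[ℝ] ExteriorAlgebra ℝ (V k n) :=
  CliffordAlgebra.contractLeft (Q := (0 : QuadraticForm ℝ (V k n)))
    (LinearMap.proj (Sum.inr (s, i)) : Module.Dual ℝ (V k n))

lemma dd_one (s : Fin n) (i : Fin k) : dd s i (1 : ExteriorAlgebra ℝ (V k n)) = 0 :=
  CliffordAlgebra.contractLeft_one (Q := (0 : QuadraticForm ℝ (V k n))) _

lemma dd_ψ (s t : Fin n) (i j : Fin k) (Y : ExteriorAlgebra ℝ (V k n)) :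
    dd s i (ψ k n t j * Y) = -(ψ k n t j * dd s i Y) := by
  have := CliffordAlgebra.contractLeft_ι_mul (Q := (0 : QuadraticForm ℝ (V k n)))
    (LinearMap.proj (Sum.inr (s, i)) : Module.Dual ℝ (V k n))
    (Pi.single (Sum.inl (t, j)) (1 : ℝ)) Y
  refine this.trans ?_
  simp [ψ, dd, ExteriorAlgebra.ι]

lemma dd_ψb (s t : Fin n) (i j : Fin k) (Y : ExteriorAlgebra ℝ (V k n)) :
    dd s i (ψb k n t j * Y) = (if s = t ∧ i = j then Y else 0) - ψb k n t j * dd s i Y := by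
  have := CliffordAlgebra.contractLeft_ι_mul (Q := (0 : QuadraticForm ℝ (V k n)))
    (LinearMap.proj (Sum.inr (s, i)) : Module.Dual ℝ (V k n))
    (Pi.single (Sum.inr (t, j)) (1 : ℝ)) Y
  refine this.trans ?_
  simp [ψb, dd, ExteriorAlgebra.ι, Pi.single_apply]

lemma dd_ω (s : Fin n) (i a b : Fin k) (Y : ExteriorAlgebra ℝ (V k n)) :
    dd s i (ω k n a b * Y) = -(if i = b then ψ k n s a * Y else 0) + ω k n a b * dd s i Y := by
  have h : ∀ t, dd s i (ψ k n t a * ψb k n t b * Y) =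
      -(if s = t then (if i = b then ψ k n s a * Y else 0) else 0)
        + ψ k n t a * ψb k n t b * dd s i Y := by
    intro t
    rw [mul_assoc, dd_ψ, dd_ψb]
    by_cases h1 : s = t <;> by_cases h2 : i = b <;> simp [h1, h2, mul_sub, mul_assoc]
    abel
  simp only [ω, Finset.sum_mul, map_sum, h, Finset.sum_add_distrib, Finset.sum_neg_distrib]
  simp

lemma dd_e (s : Fin n) (i : Fin k) (Y : ExteriorAlgebra ℝ (V k n)) :
    dd s i (trPhi k n * Y) = -(ψ k n s i * Y) + trPhi k n * dd s i Y := by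
  simp only [trPhi, Finset.sum_mul, map_sum, dd_ω, Finset.sum_add_distrib,
    Finset.sum_neg_distrib]
  simp

lemma dd_e_pow (r : ℕ) (s : Fin n) (i : Fin k) (Y : ExteriorAlgebra ℝ (V k n)) :
    dd s i (trPhi k n ^ (r + 1) * Y) =
      -(((r : ℝ) + 1) • (trPhi k n ^ r * (ψ k n s i * Y))) + trPhi k n ^ (r + 1) * dd s i Y := by
  induction r with
  | zero => simp [dd_e]
  | succ r ih =>
    have hc : ψ k n s i * (trPhi k n ^ (r + 1) * Y) = trPhi k n ^ (r + 1) * (ψ k n s i * Y) := by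
      rw [← mul_assoc, ← ((e_central (ψ k n s i)).pow_left (r + 1)).eq, mul_assoc]
    rw [pow_succ' _ (r + 1), mul_assoc, dd_e, ih, hc, mul_add, mul_neg, mul_smul_comm,
      ← mul_assoc (trPhi k n) (trPhi k n ^ r), ← pow_succ', mul_assoc]
    push_cast
    module

/-- The derivation `D^{ij}`. -/
def DD (i j : Fin k) (Y : ExteriorAlgebra ℝ (V k n)) : ExteriorAlgebra ℝ (V k n) :=
  -∑ s : Fin n, ψb k n s j * dd s i Y

lemma DD_one (i j : Fin k) : DD i j (1 : ExteriorAlgebra ℝ (V k n)) = 0 := by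
  simp [DD, dd_one]

lemma DD_sum {α : Type*} (i j : Fin k) (S : Finset α) (f : α → ExteriorAlgebra ℝ (V k n)) :
    DD i j (∑ a ∈ S, f a) = ∑ a ∈ S, DD i j (f a) := by
  simp only [DD, map_sum, Finset.mul_sum, Finset.sum_neg_distrib]
  rw [Finset.sum_comm]

lemma DD_ω (i j a b : Fin k) (Y : ExteriorAlgebra ℝ (V k n)) :
    DD i j (ω k n a b * Y) = -(if i = b then ω k n a j * Y else 0) + ω k n a b * DD i j Y := by
  have h : ∀ s, ψb k n s j * dd s i (ω k n a b * Y) =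
      (if i = b then ψ k n s a * ψb k n s j * Y else 0)
        + ω k n a b * (ψb k n s j * dd s i Y) := by
    intro s
    rw [dd_ω, mul_add, ← mul_assoc _ (ω k n a b), ← (ω_central a b (ψb k n s j)).eq, mul_assoc]
    congr 1
    split_ifs
    · rw [mul_neg, ← mul_assoc, ← neg_mul, ψ, ψb, ← ι_anti]
    · simp
  simp only [DD, h, Finset.sum_add_distrib, neg_add, mul_neg, Finset.mul_sum]
  congr 1
  split_ifs
  · simp [ω, Finset.sum_mul]
  · simp

lemma ι_mem1 (u : V k n) : ExteriorAlgebra.ι ℝ u ∈ ⋀[ℝ]^1 (V k n) := by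
  have h : ExteriorAlgebra.ι ℝ u ∈ (LinearMap.range (ExteriorAlgebra.ι ℝ (M := V k n))) ^ 1 := by
    rw [pow_one]; exact LinearMap.mem_range_self _ _
  exact h

lemma ω_mem (i j : Fin k) : ω k n i j ∈ ⋀[ℝ]^2 (V k n) :=
  Submodule.sum_mem _ fun _ _ => SetLike.mul_mem_graded (A := fun i : ℕ => ⋀[ℝ]^i (V k n))
    (ι_mem1 _) (ι_mem1 _)

lemma e_mem : trPhi k n ∈ ⋀[ℝ]^2 (V k n) := Submodule.sum_mem _ fun _ _ => ω_mem _ _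

lemma top_zero (d : ℕ) (hd : 2 * (k * n) < d) (x : ExteriorAlgebra ℝ (V k n))
    (hx : x ∈ ⋀[ℝ]^d (V k n)) : x = 0 := by
  have h : Module.finrank ℝ (⋀[ℝ]^d (V k n)) = 0 := by
    rw [exteriorPower.finrank_eq]
    apply Nat.choose_eq_zero_of_lt
    simp
    nlinarith
  have := Module.finrank_zero_iff.mp h
  exact congrArg Subtype.val (Subsingleton.elim (⟨x, hx⟩ : ⋀[ℝ]^d (V k n)) 0)

lemma step (r d : ℕ) (i j : Fin k) (Y : ExteriorAlgebra ℝ (V k n)) (hY : Y ∈ ⋀[ℝ]^d (V k n))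
    (hd : 2 * (k * n) < 2 * r + 3 + d) :
    ((r : ℝ) + 1) • (trPhi k n ^ r * (ω k n i j * Y)) =
      trPhi k n ^ (r + 1) * ((if i = j then (n : ℝ) • Y else 0) + DD i j Y) := by
  have h : ∀ s, ((r : ℝ) + 1) • (trPhi k n ^ r * (ψ k n s i * (ψb k n s j * Y))) =
      trPhi k n ^ (r + 1) * ((if i = j then Y else 0) - ψb k n s j * dd s i Y) := by
    intro s
    have h0 : trPhi k n ^ (r + 1) * (ψb k n s j * Y) = 0 := by
      apply top_zero ((r + 1) • 2 + (1 + d)) (by simp; omega)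
      exact SetLike.mul_mem_graded (A := fun i : ℕ => ⋀[ℝ]^i (V k n))
        (SetLike.pow_mem_graded (A := fun i : ℕ => ⋀[ℝ]^i (V k n)) _ e_mem)
        (SetLike.mul_mem_graded (A := fun i : ℕ => ⋀[ℝ]^i (V k n)) (ι_mem1 _) hY)
    have h1 := dd_e_pow r s i (ψb k n s j * Y)
    rw [h0, map_zero, dd_ψb] at h1
    simp only [true_and] at h1
    exact (neg_add_eq_zero.mp h1.symm)
  simp only [ω, Finset.sum_mul, Finset.mul_sum, Finset.smul_sum, mul_assoc, h]
  rw [← Finset.mul_sum, Finset.sum_sub_distrib, DD, sub_eq_add_neg]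
  congr 2
  split_ifs <;> simp [Nat.cast_smul_eq_nsmul]

lemma t_mem : trPhi2 k n ∈ ⋀[ℝ]^4 (V k n) :=
  Submodule.sum_mem _ fun _ _ => Submodule.sum_mem _ fun _ _ =>
    SetLike.mul_mem_graded (A := fun i : ℕ => ⋀[ℝ]^i (V k n)) (ω_mem _ _) (ω_mem _ _)

/-- `tr Φ³`. -/
def uu (k n : ℕ) : ExteriorAlgebra ℝ (V k n) :=
  ∑ i : Fin k, ∑ j : Fin k, ∑ l : Fin k, ω k n i j * (ω k n j l * ω k n l i)

lemma t_step (r d : ℕ) (Y : ExteriorAlgebra ℝ (V k n)) (hY : Y ∈ ⋀[ℝ]^d (V k n))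
    (hd : 2 * (k * n) < 2 * r + 5 + d) :
    ((r : ℝ) + 1) • (trPhi k n ^ r * (trPhi2 k n * Y)) =
      trPhi k n ^ (r + 1) * (((n : ℝ) - k) • (trPhi k n * Y) +
        ∑ i : Fin k, ∑ j : Fin k, ω k n j i * DD i j Y) := by
  have h : ∀ i j, ((r : ℝ) + 1) • (trPhi k n ^ r * (ω k n i j * (ω k n j i * Y))) =
      trPhi k n ^ (r + 1) * ((if i = j then (n : ℝ) • (ω k n j i * Y) else 0) +
        (- (ω k n j j * Y) + ω k n j i * DD i j Y)) := by
    intro i j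
    rw [step r (2 + d) i j _ (SetLike.mul_mem_graded (A := fun i : ℕ => ⋀[ℝ]^i (V k n))
      (ω_mem _ _) hY) (by omega), DD_ω]
    simp
  simp only [trPhi2, Finset.sum_mul, Finset.mul_sum, Finset.smul_sum, mul_assoc, h]
  simp only [← Finset.mul_sum, Finset.sum_add_distrib, Finset.sum_ite_eq, Finset.mem_univ, if_true,
    Finset.sum_neg_distrib, ← Finset.smul_sum, ← Finset.sum_mul, Finset.sum_const]
  rw [← trPhi]
  congr 1
  rw [← add_assoc]
  congr 1
  rw [sub_smul, ← Nat.cast_smul_eq_nsmul ℝ]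
  simp [sub_eq_add_neg]

lemma t_eval (r : ℕ) (hd : 2 * (k * n) < 2 * r + 5) :
    ((r : ℝ) + 1) • (trPhi k n ^ r * trPhi2 k n) = ((n : ℝ) - k) • trPhi k n ^ (r + 2) := by
  have h := t_step r 0 (1 : ExteriorAlgebra ℝ (V k n))
    (SetLike.one_mem_graded (fun i : ℕ => ⋀[ℝ]^i (V k n))) (by omega)
  simpa [DD_one, ← pow_succ] using h

lemma DD_t (i j : Fin k) :
    DD i j (trPhi2 k n) = -((2 : ℝ) • ∑ l, ω k n i l * ω k n l j) := by
  have h : ∀ a b, DD i j (ω k n a b * ω k n b a) =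
      -(if i = b then ω k n i a * ω k n a j else 0)
        - (if i = a then ω k n i b * ω k n b j else 0) := by
    intro a b
    have h2 := DD_ω (n := n) i j b a 1
    rw [mul_one, mul_one, DD_one, mul_zero, add_zero] at h2
    rw [DD_ω, h2, sub_eq_add_neg]
    congr 2
    · split_ifs with h
      · rw [(ω_central a j _).eq, h]
      · rfl
    · split_ifs with h
      · rw [h, mul_neg]
      · simp
  simp only [trPhi2, DD_sum, h, Finset.sum_sub_distrib, Finset.sum_neg_distrib]
  simp [Finset.sum_ite_irrel]
  module

lemma tt_eval (r : ℕ) (hd : 2 * (k * n) < 2 * r + 9) :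
    ((r : ℝ) + 1) • (trPhi k n ^ r * (trPhi2 k n * trPhi2 k n)) =
      ((n : ℝ) - k) • (trPhi k n ^ (r + 2) * trPhi2 k n) -
        (2 : ℝ) • (trPhi k n ^ (r + 1) * uu k n) := by
  rw [t_step r 4 _ t_mem (by omega), mul_add, mul_smul_comm, ← mul_assoc, ← pow_succ,
    sub_eq_add_neg (((n : ℝ) - k) • _)]
  congr 1
  rw [← mul_smul_comm, ← mul_neg]
  congr 1
  simp only [DD_t, uu, mul_neg, mul_smul_comm, Finset.sum_neg_distrib, Finset.mul_sum,
    Finset.smul_sum]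
  rw [Finset.sum_comm]

lemma u_eval (r : ℕ) (hd : 2 * (k * n) < 2 * r + 7) :
    ((r : ℝ) + 1) • (trPhi k n ^ r * uu k n) =
      ((n : ℝ) - k) • (trPhi k n ^ (r + 1) * trPhi2 k n) - trPhi k n ^ (r + 3) := by
  have h : ∀ i j l, ((r : ℝ) + 1) • (trPhi k n ^ r * (ω k n i j * (ω k n j l * ω k n l i))) =
      trPhi k n ^ (r + 1) * ((if i = j then (n : ℝ) • (ω k n j l * ω k n l j) else 0) +
        (-(if i = l then ω k n j j * ω k n i i else 0) - ω k n j l * ω k n l j)) := by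
    intro i j l
    have h2 := DD_ω (n := n) i j l i 1
    rw [mul_one, mul_one, DD_one, mul_zero, add_zero, if_pos rfl] at h2
    rw [step r 4 i j _ (SetLike.mul_mem_graded (A := fun i : ℕ => ⋀[ℝ]^i (V k n))
      (ω_mem _ _) (ω_mem _ _)) (by omega), DD_ω, h2, mul_neg, ← sub_eq_add_neg]
    congr 2
    · split_ifs with h
      · rw [h]
      · rfl
    · congr 2
      split_ifs with h
      · rw [h]
      · rfl
  have e3 : trPhi k n ^ (r + 3) = trPhi k n ^ (r + 1) * (trPhi k n * trPhi k n) := by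
    rw [← pow_two, ← pow_add]
  rw [e3, ← mul_smul_comm ((n : ℝ) - k), ← mul_sub]
  simp only [uu, Finset.mul_sum, Finset.smul_sum, h]
  simp only [← Finset.mul_sum]
  congr 1
  simp only [Finset.sum_add_distrib, Finset.sum_sub_distrib, Finset.sum_neg_distrib]
  have s1 : ∑ i : Fin k, ∑ j : Fin k, ∑ l : Fin k,
      (if i = j then (n : ℝ) • (ω k n j l * ω k n l j) else 0) = (n : ℝ) • trPhi2 k n := by
    simp [Finset.sum_ite_irrel, trPhi2, Finset.smul_sum]
  have s2 : ∑ i : Fin k, ∑ j : Fin k, ∑ l : Fin k,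
      (if i = l then ω k n j j * ω k n i i else 0) = trPhi k n * trPhi k n := by
    simp [trPhi, Finset.sum_mul, Finset.mul_sum]
  have s3 : ∑ i : Fin k, ∑ j : Fin k, ∑ l : Fin k,
      (ω k n j l * ω k n l j) = (k : ℝ) • trPhi2 k n := by
    simp [trPhi2, ← Nat.cast_smul_eq_nsmul ℝ]
  rw [s1, s2, s3]
  module

lemma list_pow {A : Type*} [Ring A] (l : List A) (h : ∀ a ∈ l, (∀ x, a * x = x * a) ∧ a * a = 0) :
    l.sum ^ l.length = l.length.factorial • l.prod ∧ l.sum ^ (l.length + 1) = 0 := by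
  induction l with
  | nil => simp
  | cons a l ih =>
    obtain ⟨h1, h2⟩ := ih fun b hb => h b (List.mem_cons_of_mem _ hb)
    obtain ⟨hc, hz⟩ := h a List.mem_cons_self
    have key : ∀ m : ℕ, (a + l.sum) ^ (m + 1) = l.sum ^ (m + 1) + (m + 1) • (a * l.sum ^ m) := by
      intro m
      induction m with
      | zero => simp [add_comm]
      | succ m ihm =>
        rw [pow_succ' _ (m + 1), ihm, add_mul, mul_add, mul_add, mul_smul_comm, mul_smul_comm,
          ← mul_assoc a a, hz, zero_mul, smul_zero, add_zero, ← mul_assoc l.sum a, ← hc l.sum,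
          mul_assoc, ← pow_succ', ← pow_succ', succ_nsmul _ (m + 1)]
        abel
    simp only [List.sum_cons, List.length_cons, List.prod_cons]
    refine ⟨?_, ?_⟩
    · rw [key, h2, h1, zero_add, mul_smul_comm, smul_smul, Nat.factorial_succ]
    · rw [key, pow_succ, h2]; simp

lemma e_top : trPhi k n ^ (k * n) = ((k * n).factorial : ℝ) • T k n := by
  have h := (list_pow (((List.finRange n).map (fun s =>
    ((List.finRange k).map (fun j => ψ k n s j * ψb k n s j)))).flatten) (by
      intro a ha
      simp only [List.mem_flatten, List.mem_map] at ha
      obtain ⟨_, ⟨s, _, rfl⟩, ha⟩ := ha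
      simp only [List.mem_map] at ha
      obtain ⟨j, _, rfl⟩ := ha
      refine ⟨fun x => (ιι_central _ _ x).eq, ?_⟩
      rw [mul_assoc, ← mul_assoc (ψb k n s j), ψb, ψ, ι_anti, neg_mul, mul_neg, mul_assoc,
        ExteriorAlgebra.ι_sq_zero]
      simp)).1
  rw [List.prod_flatten, List.sum_flatten, List.length_flatten] at h
  simp only [List.map_map, Function.comp_def, List.length_map, List.length_finRange,
    List.map_const', List.sum_replicate] at h
  have e1 : ((List.finRange n).map (fun s =>
    ((List.finRange k).map (fun j => ψ k n s j * ψb k n s j)).sum)).sum = trPhi k n := by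
    simp only [trPhi, ω]
    rw [Finset.sum_comm]
    simp [Fin.sum_univ_def]
  rw [e1, smul_eq_mul, mul_comm n k, ← Nat.cast_smul_eq_nsmul ℝ] at h
  exact h

end helpers

/-- `(tr Φ)^{kn−4} ∧ ((tr Φ)² − tr(Φ²))²
  = (kn−4)! · n(n+1)k(k−1) · [k(k−1)n(n−1) + 2(k−2)(k−3)n + 4(k−2)(n−1)] · T`. -/
theorem tau2_sq_eval (k N n : ℕ) (hk : 1 ≤ k) (hN : k < N) (hn : n = N - k)
    (hkn : 4 ≤ k * n) :
    (trPhi k n) ^ (k * n - 4) * ((trPhi k n) ^ 2 - trPhi2 k n) ^ 2 =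
      (((k * n - 4).factorial : ℝ) * (n : ℝ) * ((n : ℝ) + 1) * (k : ℝ) * ((k : ℝ) - 1) *
        ((k : ℝ) * ((k : ℝ) - 1) * (n : ℝ) * ((n : ℝ) - 1)
          + 2 * ((k : ℝ) - 2) * ((k : ℝ) - 3) * (n : ℝ)
          + 4 * ((k : ℝ) - 2) * ((n : ℝ) - 1))) • T k n := by
  obtain ⟨r, hr⟩ := Nat.exists_eq_add_of_le' hkn
  have htop := e_top (k := k) (n := n)
  have h1 := t_eval (k := k) (n := n) (r + 2) (by omega)
  have h2 := tt_eval (k := k) (n := n) r (by omega)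
  have h3 := u_eval (k := k) (n := n) (r + 1) (by omega)
  have hm : (k : ℝ) * n = r + 4 := by exact_mod_cast hr
  rw [hr] at htop
  rw [hr, Nat.add_sub_cancel]
  have hexp : trPhi k n ^ r * (trPhi k n ^ 2 - trPhi2 k n) ^ 2 =
      trPhi k n ^ (r + 4) - (2 : ℝ) • (trPhi k n ^ (r + 2) * trPhi2 k n)
        + trPhi k n ^ r * (trPhi2 k n * trPhi2 k n) := by
    have hc := ((e_central (trPhi2 k n)).pow_left 2).eq
    have e4 : trPhi k n ^ (r + 4) = trPhi k n ^ r * (trPhi k n ^ 2 * trPhi k n ^ 2) := by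
      rw [← pow_add, ← pow_add]
    rw [pow_two (_ - _), sub_mul, mul_sub, mul_sub, mul_sub (trPhi2 k n), ← hc, e4, pow_add _ r 2]
    simp only [mul_sub, mul_assoc, two_smul]
    abel
  rw [hexp]
  generalize trPhi k n ^ r * (trPhi2 k n * trPhi2 k n) = A at *
  have e3 : r + 2 + 2 = r + 4 := rfl
  have e5 : r + 1 + 1 = r + 2 := rfl
  have e6 : r + 1 + 3 = r + 4 := rfl
  rw [e3] at h1
  rw [e5, e6] at h3
  generalize trPhi k n ^ (r + 2) * trPhi2 k n = B at *
  generalize trPhi k n ^ (r + 1) * uu k n = C at *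
  generalize trPhi k n ^ (r + 4) = E at *
  push_cast at h1 h3
  have p1 : ((r : ℝ) + 1) ≠ 0 := by positivity
  have p2 : ((r : ℝ) + 1 + 1) ≠ 0 := by positivity
  have p3 : ((r : ℝ) + 2 + 1) ≠ 0 := by positivity
  have hB : B = (((n : ℝ) - k) / (r + 2 + 1)) • E := by
    rw [div_eq_inv_mul, mul_smul, ← h1, smul_smul, inv_mul_cancel₀ p3, one_smul]
  have hC : C = ((r : ℝ) + 1 + 1)⁻¹ • (((n : ℝ) - k) • B - E) := by
    rw [← h3, smul_smul, inv_mul_cancel₀ p2, one_smul]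
  have hA : A = ((r : ℝ) + 1)⁻¹ • (((n : ℝ) - k) • B - (2 : ℝ) • C) := by
    rw [← h2, smul_smul, inv_mul_cancel₀ p1, one_smul]
  have hf : ((r + 4).factorial : ℝ) = (r + 4) * (r + 3) * (r + 2) * (r + 1) * r.factorial := by
    simp only [Nat.factorial_succ]
    push_cast
    ring
  rw [hA, hC, hB, htop, hf]
  match_scalars
  have hr' : (r : ℝ) = k * n - 4 := by linarith
  field_simp
  rw [hr']
  ring
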